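/- Fix z ∈ ℂ. The four ℂ-linear operators W((1)), W((1,1)), W((2),z), W((2,1),z) on the polynomial ring ℂ[p₁,p₂,p₃,…] pairwise commute. -/

import Mathlib

/-!
Everything reduces to two commuting linear operators. Let `E = W1`, the derivation of
`ℂ[p₁,p₂,…]` that multiplies a monomial by its weight (`p_a` having weight `a`), and let
`D = W2 z`. Each summand of `D` preserves the weight, so `E` and `D` commute (`eulerD_W2`).
Normal ordering (moving every derivative to the right) by means of
`E ∂_a = ∂_a E - a ∂_a` and the Leibniz rule gives

* `W11 = (1/2) (E² - E)` (`W11_eq`),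
* `W21 z = E D - 2 D` (`W21_eq`),

so that all four operators are polynomials in `E` and `D`.

The sums over all positive integers are handled by fixing a bound `N` beyond which all partial
derivatives of the given polynomial vanish (`VarsLE N f`); all sums then run over `a ≤ N`.
-/

open MvPolynomial

/-- The coefficient cast `ℕ+ → ℂ`. -/
def cc (a : ℕ+) : ℂ := ((a : ℕ) : ℂ)

/-- The operator `W((1)) = ∑_a a·p_a·∂/∂p_a` on `ℂ[p₁,p₂,…]`
(the `p_a` are the variables `X a` of `MvPolynomial ℕ+ ℂ`; on any given polynomial
only finitely many summands are nonzero, and `∑ᶠ` denotes this finite sum). -/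
noncomputable def W1 (f : MvPolynomial ℕ+ ℂ) : MvPolynomial ℕ+ ℂ :=
  ∑ᶠ a : ℕ+, cc a • (X a * pderiv a f)

/-- The operator `W((1,1)) = (1/2)∑_a a(a-1)·p_a·∂/∂p_a
+ (1/2)∑_{a,b} ab·p_a p_b·∂²/(∂p_a∂p_b)`. -/
noncomputable def W11 (f : MvPolynomial ℕ+ ℂ) : MvPolynomial ℕ+ ℂ :=
  (1/2 : ℂ) • (∑ᶠ a : ℕ+, (cc a * (cc a - 1)) • (X a * pderiv a f))
  + (1/2 : ℂ) • (∑ᶠ a : ℕ+, ∑ᶠ b : ℕ+,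
      (cc a * cc b) • (X a * X b * pderiv a (pderiv b f)))

/-- The operator `W((1,1,1)) = (1/6)∑_a a(a-1)(a-2)·p_a·∂/∂p_a
+ (1/2)∑_{a,b} a(a-1)b·p_a p_b·∂²/(∂p_a∂p_b)
+ (1/6)∑_{a,b,c} abc·p_a p_b p_c·∂³/(∂p_a∂p_b∂p_c)`. -/
noncomputable def W111 (f : MvPolynomial ℕ+ ℂ) : MvPolynomial ℕ+ ℂ :=
  (1/6 : ℂ) • (∑ᶠ a : ℕ+, (cc a * (cc a - 1) * (cc a - 2)) • (X a * pderiv a f))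
  + (1/2 : ℂ) • (∑ᶠ a : ℕ+, ∑ᶠ b : ℕ+,
      (cc a * (cc a - 1) * cc b) • (X a * X b * pderiv a (pderiv b f)))
  + (1/6 : ℂ) • (∑ᶠ a : ℕ+, ∑ᶠ b : ℕ+, ∑ᶠ c : ℕ+,
      (cc a * cc b * cc c) • (X a * X b * X c * pderiv a (pderiv b (pderiv c f))))

/-- The operator `W((2),z) = (1/2)∑_{a,b}(a+b)·p_a p_b·∂/∂p_{a+b}
+ (z²/2)∑_{a,b} ab·p_{a+b}·∂²/(∂p_a∂p_b)`. -/
noncomputable def W2 (z : ℂ) (f : MvPolynomial ℕ+ ℂ) : MvPolynomial ℕ+ ℂ :=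
  (1/2 : ℂ) • (∑ᶠ a : ℕ+, ∑ᶠ b : ℕ+,
      (cc a + cc b) • (X a * X b * pderiv (a + b) f))
  + (z^2/2 : ℂ) • (∑ᶠ a : ℕ+, ∑ᶠ b : ℕ+,
      (cc a * cc b) • (X (a + b) * pderiv a (pderiv b f)))

/-- The operator `W((2,1),z) = (1/2)∑_{a,b}(a+b)(a+b-2)·p_a p_b·∂/∂p_{a+b}
+ (1/2)∑_{a,b,c}(a+b)c·p_a p_b p_c·∂²/(∂p_{a+b}∂p_c)
+ (z²/2)∑_{a,b,c} abc·p_a p_{b+c}·∂³/(∂p_a∂p_b∂p_c)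
+ (z²/2)∑_{a,b} ab(a+b-2)·p_{a+b}·∂²/(∂p_a∂p_b)`. -/
noncomputable def W21 (z : ℂ) (f : MvPolynomial ℕ+ ℂ) : MvPolynomial ℕ+ ℂ :=
  (1/2 : ℂ) • (∑ᶠ a : ℕ+, ∑ᶠ b : ℕ+,
      ((cc a + cc b) * (cc a + cc b - 2)) • (X a * X b * pderiv (a + b) f))
  + (1/2 : ℂ) • (∑ᶠ a : ℕ+, ∑ᶠ b : ℕ+, ∑ᶠ c : ℕ+,
      ((cc a + cc b) * cc c) • (X a * X b * X c * pderiv (a + b) (pderiv c f)))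
  + (z^2/2 : ℂ) • (∑ᶠ a : ℕ+, ∑ᶠ b : ℕ+, ∑ᶠ c : ℕ+,
      (cc a * cc b * cc c) • (X a * X (b + c) * pderiv a (pderiv b (pderiv c f))))
  + (z^2/2 : ℂ) • (∑ᶠ a : ℕ+, ∑ᶠ b : ℕ+,
      (cc a * cc b * (cc a + cc b - 2)) • (X (a + b) * pderiv a (pderiv b f)))

/-! ### The Euler derivation and its commutator with partial derivatives -/

/-- The Euler derivation, sending `p_a` to `a·p_a`. -/
noncomputable def eulerD : Derivation ℂ (MvPolynomial ℕ+ ℂ) (MvPolynomial ℕ+ ℂ) :=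
  mkDerivation ℂ (fun a => cc a • (X a : MvPolynomial ℕ+ ℂ))

lemma eulerD_X (a : ℕ+) : eulerD (X a) = cc a • (X a : MvPolynomial ℕ+ ℂ) := by
  simp [eulerD, mkDerivation_X]

/-- `f` involves only the variables `p_a` with `a ≤ N`, expressed by the vanishing of the other
partial derivatives. -/
def VarsLE (N : ℕ+) (f : MvPolynomial ℕ+ ℂ) : Prop := ∀ a, N < a → pderiv a f = 0

lemma exists_varsLE (f : MvPolynomial ℕ+ ℂ) : ∃ N, f.vars ⊆ Finset.Iic N ∧ VarsLE N f := by
  obtain ⟨N, hN⟩ := f.vars.bddAbove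
  refine ⟨N, fun a ha => Finset.mem_Iic.2 (hN ha), fun a ha => ?_⟩
  exact pderiv_eq_zero_of_notMem_vars fun h => (not_le.2 ha) (hN h)

lemma VarsLE.mono {N M : ℕ+} {f : MvPolynomial ℕ+ ℂ} (h : VarsLE N f) (hNM : N ≤ M) :
    VarsLE M f := fun a ha => h a (hNM.trans_lt ha)

lemma pderiv_swap (a b : ℕ+) (f : MvPolynomial ℕ+ ℂ) :
    pderiv a (pderiv b f) = pderiv b (pderiv a f) := by
  have h : ⁅(pderiv a : Derivation ℂ (MvPolynomial ℕ+ ℂ) (MvPolynomial ℕ+ ℂ)),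
      (pderiv b : Derivation ℂ (MvPolynomial ℕ+ ℂ) (MvPolynomial ℕ+ ℂ))⁆ = 0 := by
    apply MvPolynomial.derivation_ext
    intro i
    simp only [Derivation.commutator_apply, pderiv_X, Derivation.zero_apply]
    by_cases h1 : i = a <;> by_cases h2 : i = b <;> simp [Pi.single_apply, h1, h2] <;>
      split_ifs <;> simp
  have := DFunLike.congr_fun h f
  rwa [Derivation.commutator_apply, Derivation.zero_apply, sub_eq_zero] at this

lemma VarsLE.deriv {N : ℕ+} {f : MvPolynomial ℕ+ ℂ} (h : VarsLE N f) (b : ℕ+) :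
    VarsLE N (pderiv b f) := fun a ha => by rw [pderiv_swap, h a ha, map_zero]

lemma eulerD_pderiv (a : ℕ+) (f : MvPolynomial ℕ+ ℂ) :
    eulerD (pderiv a f) = pderiv a (eulerD f) - cc a • pderiv a f := by
  have h : ⁅eulerD, (pderiv a : Derivation ℂ (MvPolynomial ℕ+ ℂ) (MvPolynomial ℕ+ ℂ))⁆
      = - (cc a • pderiv a) := by
    apply MvPolynomial.derivation_ext
    intro i
    simp only [Derivation.commutator_apply, pderiv_X, eulerD_X, Derivation.neg_apply,
      Derivation.smul_apply, Derivation.map_smul]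
    rcases eq_or_ne i a with rfl | h1
    · simp
    · simp [h1]
  have := DFunLike.congr_fun h f
  rw [Derivation.commutator_apply, Derivation.neg_apply, Derivation.smul_apply] at this
  rw [sub_eq_iff_eq_add.1 this]; abel

lemma VarsLE.euler {N : ℕ+} {f : MvPolynomial ℕ+ ℂ} (h : VarsLE N f) :
    VarsLE N (eulerD f) := fun a ha => by
  have := eulerD_pderiv a f
  rw [h a ha] at this
  simpa using this.symm

/-! ### Truncation of the sums -/

section finsum
variable {M : Type*} [AddCommMonoid M]

lemma finsum_eq1 (N : ℕ+) (F : ℕ+ → M) (h : ∀ a, N < a → F a = 0) :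
    ∑ᶠ a, F a = ∑ a ∈ Finset.Iic N, F a := by
  apply finsum_eq_sum_of_support_subset
  intro a ha
  by_contra hn
  exact ha (h a (by simpa using hn))

lemma finsum_eq2 (N : ℕ+) (F : ℕ+ → ℕ+ → M) (h1 : ∀ a b, N < a → F a b = 0)
    (h2 : ∀ a b, N < b → F a b = 0) :
    ∑ᶠ a, ∑ᶠ b, F a b = ∑ a ∈ Finset.Iic N, ∑ b ∈ Finset.Iic N, F a b := by
  rw [finsum_eq1 N]
  · exact Finset.sum_congr rfl fun a _ => finsum_eq1 N _ (h2 a)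
  · intro a ha
    simp [h1 a _ ha]

lemma finsum_eq3 (N : ℕ+) (F : ℕ+ → ℕ+ → ℕ+ → M) (h1 : ∀ a b c, N < a → F a b c = 0)
    (h2 : ∀ a b c, N < b → F a b c = 0) (h3 : ∀ a b c, N < c → F a b c = 0) :
    ∑ᶠ a, ∑ᶠ b, ∑ᶠ c, F a b c
      = ∑ a ∈ Finset.Iic N, ∑ b ∈ Finset.Iic N, ∑ c ∈ Finset.Iic N, F a b c := by
  rw [finsum_eq1 N]
  · exact Finset.sum_congr rfl fun a _ => finsum_eq2 N _ (h2 a) (h3 a)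
  · intro a ha
    simp [h1 a _ _ ha]

end finsum

lemma VarsLE.add_left {N : ℕ+} {f : MvPolynomial ℕ+ ℂ} (h : VarsLE N f) {a : ℕ+} (b : ℕ+)
    (ha : N < a) : pderiv (a + b) f = 0 :=
  h _ (ha.trans (PNat.lt_add_right a b))

lemma VarsLE.add_right {N : ℕ+} {f : MvPolynomial ℕ+ ℂ} (h : VarsLE N f) (a : ℕ+) {b : ℕ+}
    (hb : N < b) : pderiv (a + b) f = 0 :=
  h _ (hb.trans (PNat.lt_add_left b a))

lemma eulerD_eq_sum {N : ℕ+} {f : MvPolynomial ℕ+ ℂ} (h : VarsLE N f) :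
    eulerD f = ∑ a ∈ Finset.Iic N, cc a • (X a * pderiv a f) := by
  obtain ⟨M, hM, hM'⟩ := exists_varsLE f
  -- a bound on `f.vars` itself is what allows the comparison of derivations on the variables
  have key : eulerD f = ∑ a ∈ Finset.Iic M, cc a • (X a * pderiv a f) := by
    have : eulerD f = (∑ a ∈ Finset.Iic M, (cc a • (X a : MvPolynomial ℕ+ ℂ)) •
        (pderiv a : Derivation ℂ (MvPolynomial ℕ+ ℂ) (MvPolynomial ℕ+ ℂ))) f := by
      apply derivation_eq_of_forall_mem_vars
      intro i hi
      rw [eulerD_X, ← Derivation.coeFnAddMonoidHom_apply, map_sum, Finset.sum_apply]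
      simp only [Derivation.coeFnAddMonoidHom_apply, Derivation.smul_apply, pderiv_X]
      rw [Finset.sum_eq_single i]
      · simp
      · intro b _ hb
        simp [hb]
      · exact fun h => absurd (hM hi) h
    rw [this, ← Derivation.coeFnAddMonoidHom_apply, map_sum, Finset.sum_apply]
    simp [Derivation.coeFnAddMonoidHom_apply]
  rw [key, ← finsum_eq1, ← finsum_eq1]
  · intro a ha; simp [h a ha]
  · intro a ha; simp [hM' a ha]

lemma W1_eq (f : MvPolynomial ℕ+ ℂ) : W1 f = eulerD f := by
  obtain ⟨N, -, h⟩ := exists_varsLE f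
  rw [eulerD_eq_sum h, W1, finsum_eq1 N]
  intro a ha; simp [h a ha]

/-! ### Linearity of `W2` and commutation with the Euler derivation -/

/-- The truncation of `W2 z` to indices `a, b ≤ N`. -/
noncomputable def D2 (N : ℕ+) (z : ℂ) (f : MvPolynomial ℕ+ ℂ) : MvPolynomial ℕ+ ℂ :=
  (1/2 : ℂ) • (∑ a ∈ Finset.Iic N, ∑ b ∈ Finset.Iic N,
      (cc a + cc b) • (X a * X b * pderiv (a + b) f))
  + (z^2/2 : ℂ) • (∑ a ∈ Finset.Iic N, ∑ b ∈ Finset.Iic N,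
      (cc a * cc b) • (X (a + b) * pderiv a (pderiv b f)))

lemma W2_eq_D2 (z : ℂ) {N : ℕ+} {f : MvPolynomial ℕ+ ℂ} (h : VarsLE N f) : W2 z f = D2 N z f := by
  rw [W2, D2, finsum_eq2 N, finsum_eq2 N]
  · intro a b ha; simp [h.deriv b a ha]
  · intro a b hb; simp [h b hb]
  · intro a b ha; simp [h.add_left b ha]
  · intro a b hb; simp [h.add_right a hb]

lemma W2_add (z : ℂ) (f g : MvPolynomial ℕ+ ℂ) : W2 z (f + g) = W2 z f + W2 z g := by
  obtain ⟨N, -, h⟩ := exists_varsLE f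
  obtain ⟨M, -, h'⟩ := exists_varsLE g
  have hf : VarsLE (max N M) f := h.mono (le_max_left _ _)
  have hg : VarsLE (max N M) g := h'.mono (le_max_right _ _)
  have hfg : VarsLE (max N M) (f + g) := fun a ha => by rw [map_add, hf a ha, hg a ha, add_zero]
  rw [W2_eq_D2 z hf, W2_eq_D2 z hg, W2_eq_D2 z hfg]
  simp only [D2, map_add, mul_add, smul_add, Finset.sum_add_distrib]
  abel

lemma W2_smul (z c : ℂ) (f : MvPolynomial ℕ+ ℂ) : W2 z (c • f) = c • W2 z f := by
  obtain ⟨N, -, h⟩ := exists_varsLE f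
  have h' : VarsLE N (c • f) := fun a ha => by rw [Derivation.map_smul, h a ha, smul_zero]
  rw [W2_eq_D2 z h, W2_eq_D2 z h']
  simp only [D2, Derivation.map_smul, mul_smul_comm, smul_add, Finset.smul_sum, smul_comm c]

lemma cc_add (a b : ℕ+) : cc (a + b) = cc a + cc b := by simp [cc]

/-- `p_a p_b ∂_{a+b}` has weight zero, hence commutes with the Euler derivation. -/
lemma eulerD_term1 (a b : ℕ+) (f : MvPolynomial ℕ+ ℂ) :
    eulerD (X a * X b * pderiv (a + b) f) = X a * X b * pderiv (a + b) (eulerD f) := by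
  simp only [Derivation.leibniz, eulerD_X, eulerD_pderiv, cc_add, smul_eq_C_mul, smul_eq_mul,
    map_add]
  ring

/-- `p_{a+b} ∂_a ∂_b` has weight zero, hence commutes with the Euler derivation. -/
lemma eulerD_term2 (a b : ℕ+) (f : MvPolynomial ℕ+ ℂ) :
    eulerD (X (a + b) * pderiv a (pderiv b f))
      = X (a + b) * pderiv a (pderiv b (eulerD f)) := by
  simp only [Derivation.leibniz, eulerD_X, eulerD_pderiv, cc_add, smul_eq_C_mul, smul_eq_mul,
    map_add, map_sub, pderiv_C]
  ring

lemma eulerD_W2 (z : ℂ) (f : MvPolynomial ℕ+ ℂ) : eulerD (W2 z f) = W2 z (eulerD f) := by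
  obtain ⟨N, -, h⟩ := exists_varsLE f
  rw [W2_eq_D2 z h, W2_eq_D2 z h.euler]
  simp only [D2, map_add, Derivation.map_smul, map_sum, eulerD_term1, eulerD_term2]

/-! ### `W11` and `W21` in normal-ordered form -/

lemma W11_eq (f : MvPolynomial ℕ+ ℂ) :
    W11 f = (1/2 : ℂ) • (eulerD (eulerD f) - eulerD f) := by
  obtain ⟨N, -, h⟩ := exists_varsLE f
  have e1 : eulerD (eulerD f) = ∑ a ∈ Finset.Iic N, (cc a * cc a) • (X a * pderiv a f)
      + ∑ a ∈ Finset.Iic N, ∑ b ∈ Finset.Iic N,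
        (cc a * cc b) • (X a * X b * pderiv a (pderiv b f)) := by
    conv_lhs => rw [eulerD_eq_sum h]
    rw [map_sum, ← Finset.sum_add_distrib]
    refine Finset.sum_congr rfl fun a _ => ?_
    rw [Derivation.map_smul, Derivation.leibniz, eulerD_X, eulerD_eq_sum (h.deriv a)]
    simp only [smul_eq_mul, Finset.mul_sum, smul_add, Finset.smul_sum]
    rw [add_comm]
    congr 1
    · simp only [smul_eq_C_mul, map_mul]; ring
    · refine Finset.sum_congr rfl fun b _ => ?_
      rw [pderiv_swap b a]
      simp only [smul_eq_C_mul, map_mul]; ring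
  rw [e1, eulerD_eq_sum h, W11, finsum_eq1 N, finsum_eq2 N, ← smul_add]
  · congr 1
    rw [add_sub_right_comm, ← Finset.sum_sub_distrib]
    congr 1
    refine Finset.sum_congr rfl fun a _ => ?_
    rw [← sub_smul]; congr 1; ring
  · intro a b ha; simp [h.deriv b a ha]
  · intro a b hb; simp [h b hb]
  · intro a ha; simp [h a ha]

/-- Normal ordering of `E` applied to a summand of the first half of `W2`. -/
lemma normal_order1 {N : ℕ+} {f : MvPolynomial ℕ+ ℂ} (h : VarsLE N f) (a b : ℕ+) :
    eulerD ((cc a + cc b) • (X a * X b * pderiv (a + b) f))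
      = ((cc a + cc b) * (cc a + cc b)) • (X a * X b * pderiv (a + b) f)
        + ∑ c ∈ Finset.Iic N,
          ((cc a + cc b) * cc c) • (X a * X b * X c * pderiv (a + b) (pderiv c f)) := by
  rw [Derivation.map_smul, Derivation.leibniz, Derivation.leibniz, eulerD_X, eulerD_X,
    eulerD_eq_sum (h.deriv (a + b))]
  simp only [smul_eq_mul, Finset.mul_sum, smul_add, Finset.smul_sum]
  refine (add_comm _ _).trans (congrArg₂ (· + ·) ?_ ?_)
  · simp only [smul_eq_C_mul, map_mul, map_add]; ring
  · refine Finset.sum_congr rfl fun c _ => ?_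
    rw [pderiv_swap c (a + b)]
    simp only [smul_eq_C_mul, map_mul, map_add]; ring

/-- Normal ordering of `E` applied to a summand of the second half of `W2`. -/
lemma normal_order2 {N : ℕ+} {f : MvPolynomial ℕ+ ℂ} (h : VarsLE N f) (a b : ℕ+) :
    eulerD ((cc a * cc b) • (X (a + b) * pderiv a (pderiv b f)))
      = (cc a * cc b * (cc a + cc b)) • (X (a + b) * pderiv a (pderiv b f))
        + ∑ c ∈ Finset.Iic N,
          (cc c * cc a * cc b) • (X c * X (a + b) * pderiv c (pderiv a (pderiv b f))) := by
  rw [Derivation.map_smul, Derivation.leibniz, eulerD_X, cc_add,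
    eulerD_eq_sum ((h.deriv b).deriv a)]
  simp only [smul_eq_mul, Finset.mul_sum, smul_add, Finset.smul_sum]
  refine (add_comm _ _).trans (congrArg₂ (· + ·) ?_ ?_)
  · simp only [smul_eq_C_mul, map_mul, map_add]; ring
  · refine Finset.sum_congr rfl fun c _ => ?_
    simp only [smul_eq_C_mul, map_mul]; ring

lemma W21_eq (z : ℂ) (f : MvPolynomial ℕ+ ℂ) :
    W21 z f = eulerD (W2 z f) - (2 : ℂ) • W2 z f := by
  obtain ⟨N, -, h⟩ := exists_varsLE f
  rw [W2_eq_D2 z h, W21, finsum_eq2 N, finsum_eq3 N, finsum_eq3 N, finsum_eq2 N]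
  · simp only [D2, map_add, Derivation.map_smul, map_sum, normal_order1 h, normal_order2 h,
      Finset.sum_add_distrib, mul_sub, sub_smul, Finset.sum_sub_distrib]
    -- in the `z²` term the index coming from `E` is innermost, while `W21` has it outermost
    have e : ∀ G : ℕ+ → ℕ+ → ℕ+ → MvPolynomial ℕ+ ℂ,
        ∑ a ∈ Finset.Iic N, ∑ b ∈ Finset.Iic N, ∑ c ∈ Finset.Iic N, G c a b
          = ∑ c ∈ Finset.Iic N, ∑ a ∈ Finset.Iic N, ∑ b ∈ Finset.Iic N, G c a b := by
      intro G
      rw [Finset.sum_comm]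
      rw [Finset.sum_congr rfl fun b _ => Finset.sum_comm, Finset.sum_comm]
      exact Finset.sum_congr rfl fun c _ => Finset.sum_comm
    rw [e fun c a b =>
      (cc c * cc a * cc b) • (X c * X (a + b) * pderiv c (pderiv a (pderiv b f)))]
    simp only [mul_comm _ (2 : ℂ), mul_smul (2 : ℂ), ← Finset.smul_sum]
    module
  · intro a b ha; simp [h.deriv b a ha]
  · intro a b hb; simp [h b hb]
  · intro a b c ha; simp [(h.deriv c).deriv b a ha]
  · intro a b c hb; simp [h.deriv c b hb]
  · intro a b c hc; simp [h c hc]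
  · intro a b c ha; simp [(h.deriv c).add_left b ha]
  · intro a b c hb; simp [(h.deriv c).add_right a hb]
  · intro a b c hc; simp [h c hc]
  · intro a b ha; simp [h.add_left b ha]
  · intro a b hb; simp [h.add_right a hb]

/-! ### Commutation -/

lemma W2_sub (z : ℂ) (f g : MvPolynomial ℕ+ ℂ) : W2 z (f - g) = W2 z f - W2 z g := by
  rw [eq_sub_iff_add_eq, ← W2_add, sub_add_cancel]

/-- the four operators `W((1))`, `W((1,1))`, `W((2),z)`, `W((2,1),z)` on
`ℂ[p₁,p₂,…]` pairwise commute. -/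
theorem W_operators_commute (z : ℂ) :
    ∀ F ∈ ({W1, W11, W2 z, W21 z} :
        Set (MvPolynomial ℕ+ ℂ → MvPolynomial ℕ+ ℂ)),
      ∀ G ∈ ({W1, W11, W2 z, W21 z} :
          Set (MvPolynomial ℕ+ ℂ → MvPolynomial ℕ+ ℂ)),
        ∀ f : MvPolynomial ℕ+ ℂ, F (G f) = G (F f) := by
  intro F hF G hG f
  simp only [Set.mem_insert_iff, Set.mem_singleton_iff] at hF hG
  rcases hF with rfl | rfl | rfl | rfl <;> rcases hG with rfl | rfl | rfl | rfl <;>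
    simp only [W1_eq, W11_eq, W21_eq, W2_sub, W2_smul, eulerD_W2, map_sub, Derivation.map_smul] <;>
    module
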